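/- arXiv:2003.00716 — 5 statements merged into one kernel-verified Lean document; each statement's English description precedes it below -/
import Mathlib

section
/- Conservation of the Hamiltonian on the sphere: Let N ∈ ℕ, let Γ : Fin N → ℝ, and let r : ℝ → Fin N → ℝ³ be differentiable curves solving the point-vortex equations on the sphere, with ‖rᵢ(0)‖ = 1 for all i and rᵢ(t)·rⱼ(t) ≠ 1 for all i ≠ j and all t. Then the Hamiltonian H(t) = −(1/(4π)) Σ_{i≠j} Γᵢ Γⱼ log(1 − rᵢ(t)·rⱼ(t)) is constant in t. -/
open scoped BigOperators

noncomputable def dot3 (a b : Fin 3 → ℝ) : ℝ := ∑ i, a i * b i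

noncomputable def sphereRHS (N : ℕ) (Γ : Fin N → ℝ) (r : Fin N → Fin 3 → ℝ) (i : Fin N) :
    Fin 3 → ℝ :=
  (1 / (2 * Real.pi)) •
    ∑ j ∈ Finset.univ.filter (fun j => j ≠ i),
      (Γ j / (1 - dot3 (r i) (r j))) • crossProduct (r i) (r j)

def IsPVSolutionSphere (N : ℕ) (Γ : Fin N → ℝ) (r : ℝ → Fin N → Fin 3 → ℝ) : Prop :=
  (∀ t : ℝ, ∀ i j : Fin N, i ≠ j → dot3 (r t i) (r t j) ≠ 1) ∧
  (∀ (t : ℝ) (i : Fin N), HasDerivAt (fun s => r s i) (sphereRHS N Γ (r t) i) t)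

noncomputable def sphereHamiltonian (N : ℕ) (Γ : Fin N → ℝ) (r : Fin N → Fin 3 → ℝ) : ℝ :=
  -(1 / (4 * Real.pi)) *
    ∑ i, ∑ j ∈ Finset.univ.filter (fun j => j ≠ i),
      Γ i * Γ j * Real.log (1 - dot3 (r i) (r j))

/-!
Consider an energy `E = ∑_{i≠j} Γᵢ Γⱼ φ(rᵢ·rⱼ)` and put `Vᵢ = ∑_{j≠i} Γⱼ φ'(rᵢ·rⱼ) rⱼ`. Each pair
contributes to `E'` through both of its points, and by symmetry the two contributions have the same
sum, so `E' = 2 ∑ᵢ Γᵢ rᵢ'·Vᵢ`. For `φ(x) = log (1 - x)` the point-vortex equations read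
`rᵢ' = -(1/2π) rᵢ × Vᵢ`. Hence `rᵢ'` is orthogonal to `Vᵢ` and `E' = 0`.
-/

open scoped Matrix

section PairInteraction

variable {ι n R : Type*} [Fintype ι] [DecidableEq ι] [Fintype n]

/-- The energy `∑_{i≠j} Γᵢ Γⱼ φ(rᵢ·rⱼ)` of points `rᵢ` with strengths `Γᵢ` under the pair potential
`φ`. The sum is over ordered pairs, so every unordered pair is counted twice. -/
def pairEnergy [CommSemiring R] (Γ : ι → R) (φ : R → R) (r : ι → n → R) : R :=
  ∑ i, ∑ j with j ≠ i, Γ i * Γ j * φ (r i ⬝ᵥ r j)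

/-- The field `Vᵢ = ∑_{j≠i} Γⱼ ψ(rᵢ·rⱼ) rⱼ` exerted on the point `rᵢ` by the others. For `ψ = φ'` it
is the gradient in `rᵢ` of `pairEnergy Γ φ`, divided by `2 Γᵢ`. -/
def pairField [CommSemiring R] (Γ : ι → R) (ψ : R → R) (r : ι → n → R) (i : ι) : n → R :=
  ∑ j with j ≠ i, (Γ j * ψ (r i ⬝ᵥ r j)) • r j

lemma sum_sum_ne_comm {M : Type*} [AddCommMonoid M] (f : ι → ι → M) :
    ∑ i, ∑ j with j ≠ i, f i j = ∑ i, ∑ j with j ≠ i, f j i :=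
  Finset.sum_comm' fun i j => by simp [ne_comm]

lemma sum_mul_dotProduct_pairField [CommSemiring R] (Γ : ι → R) (ψ : R → R) (r v : ι → n → R) :
    ∑ i, Γ i * (v i ⬝ᵥ pairField Γ ψ r i) =
      ∑ i, ∑ j with j ≠ i, Γ i * Γ j * (ψ (r i ⬝ᵥ r j) * (v i ⬝ᵥ r j)) := by
  simp only [pairField, dotProduct_sum, dotProduct_smul, smul_eq_mul, Finset.mul_sum, mul_assoc]

lemma sum_mul_dotProduct_pairField_symm [CommSemiring R] (Γ : ι → R) (ψ : R → R)
    (r v : ι → n → R) :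
    ∑ i, Γ i * (v i ⬝ᵥ pairField Γ ψ r i) =
      ∑ i, ∑ j with j ≠ i, Γ i * Γ j * (ψ (r i ⬝ᵥ r j) * (r i ⬝ᵥ v j)) := by
  rw [sum_mul_dotProduct_pairField, sum_sum_ne_comm]
  simp only [dotProduct_comm, mul_comm]

lemma hasDerivAt_dotProduct {𝕜 : Type*} [NontriviallyNormedField 𝕜] {a b : 𝕜 → n → 𝕜}
    {a' b' : n → 𝕜} {t : 𝕜} (ha : HasDerivAt a a' t) (hb : HasDerivAt b b' t) :
    HasDerivAt (fun s => a s ⬝ᵥ b s) (a' ⬝ᵥ b t + a t ⬝ᵥ b') t := by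
  rw [hasDerivAt_pi] at ha hb
  simp only [dotProduct, ← Finset.sum_add_distrib]
  exact HasDerivAt.fun_sum fun k _ => (ha k).mul (hb k)

theorem hasDerivAt_pairEnergy {𝕜 : Type*} [NontriviallyNormedField 𝕜] (Γ : ι → 𝕜) {φ φ' : 𝕜 → 𝕜}
    {r : 𝕜 → ι → n → 𝕜} {v : ι → n → 𝕜} {t : 𝕜}
    (hφ : ∀ i j, i ≠ j → HasDerivAt φ (φ' (r t i ⬝ᵥ r t j)) (r t i ⬝ᵥ r t j))
    (hr : ∀ i, HasDerivAt (fun s => r s i) (v i) t) :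
    HasDerivAt (fun s => pairEnergy Γ φ (r s))
      (2 * ∑ i, Γ i * (v i ⬝ᵥ pairField Γ φ' (r t) i)) t := by
  have hpairs : HasDerivAt (fun s => pairEnergy Γ φ (r s))
      (∑ i, ∑ j with j ≠ i,
        Γ i * Γ j * (φ' (r t i ⬝ᵥ r t j) * (v i ⬝ᵥ r t j + r t i ⬝ᵥ v j))) t :=
    HasDerivAt.fun_sum fun i _ => HasDerivAt.fun_sum fun j hj =>
      ((hφ i j (Finset.mem_filter.mp hj).2.symm).comp t
        (hasDerivAt_dotProduct (hr i) (hr j))).const_mul _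
  convert hpairs using 1
  simp only [mul_add, Finset.sum_add_distrib]
  rw [← sum_mul_dotProduct_pairField, ← sum_mul_dotProduct_pairField_symm, two_mul]

theorem pairEnergy_eq_of_velocity_orthogonal {𝕜 : Type*} [RCLike 𝕜] (Γ : ι → 𝕜) {φ φ' : 𝕜 → 𝕜}
    {r v : 𝕜 → ι → n → 𝕜}
    (hφ : ∀ t i j, i ≠ j → HasDerivAt φ (φ' (r t i ⬝ᵥ r t j)) (r t i ⬝ᵥ r t j))
    (hr : ∀ t i, HasDerivAt (fun s => r s i) (v t i) t)
    (hv : ∀ t i, v t i ⬝ᵥ pairField Γ φ' (r t) i = 0) (t₁ t₂ : 𝕜) :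
    pairEnergy Γ φ (r t₁) = pairEnergy Γ φ (r t₂) := by
  have hderiv : ∀ t, HasDerivAt (fun s => pairEnergy Γ φ (r s)) 0 t := fun t => by
    simpa only [hv, mul_zero, Finset.sum_const_zero] using hasDerivAt_pairEnergy Γ (hφ t) (hr t)
  exact is_const_of_deriv_eq_zero (fun t => (hderiv t).differentiableAt)
    (fun t => (hderiv t).deriv) t₁ t₂

end PairInteraction

lemma hasDerivAt_log_one_sub {x : ℝ} (hx : x ≠ 1) :
    HasDerivAt (fun y => Real.log (1 - y)) (-(1 - x)⁻¹) x := by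
  simpa only [neg_div, one_div] using
    ((hasDerivAt_id' x).const_sub 1).log (sub_ne_zero.mpr hx.symm)

section Sphere

variable (N : ℕ) (Γ : Fin N → ℝ) (r : Fin N → Fin 3 → ℝ)

lemma sphereHamiltonian_eq_pairEnergy :
    sphereHamiltonian N Γ r =
      -(1 / (4 * Real.pi)) * pairEnergy Γ (fun x => Real.log (1 - x)) r :=
  rfl

lemma sphereRHS_eq_cross_pairField (i : Fin N) :
    sphereRHS N Γ r i =
      (-(1 / (2 * Real.pi))) • (r i ⨯₃ pairField Γ (fun x => -(1 - x)⁻¹) r i) := by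
  simp only [sphereRHS, pairField, map_sum, map_neg, map_smul, div_eq_mul_inv, mul_neg, neg_smul,
    Finset.sum_neg_distrib, smul_neg, neg_neg]
  rfl

lemma sphereRHS_dotProduct_pairField (i : Fin N) :
    sphereRHS N Γ r i ⬝ᵥ pairField Γ (fun x => -(1 - x)⁻¹) r i = 0 := by
  rw [sphereRHS_eq_cross_pairField, smul_dotProduct, dotProduct_comm, dot_cross_self, smul_zero]

end Sphere

-- Off the unit sphere `1 - rᵢ·rⱼ` may be negative, and `Real.log` then gives `log |1 - rᵢ·rⱼ|`,
-- whose derivative is given by the same formula.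
theorem sphere_hamiltonian_conserved_general (N : ℕ) (Γ : Fin N → ℝ) (r : ℝ → Fin N → Fin 3 → ℝ)
    (hsol : IsPVSolutionSphere N Γ r) (t : ℝ) :
    sphereHamiltonian N Γ (r t) = sphereHamiltonian N Γ (r 0) := by
  obtain ⟨hne, hode⟩ := hsol
  simp only [sphereHamiltonian_eq_pairEnergy]
  congr 1
  exact pairEnergy_eq_of_velocity_orthogonal Γ
    (fun s i j hij => hasDerivAt_log_one_sub (hne s i j hij)) hode
    (fun s => sphereRHS_dotProduct_pairField N Γ (r s)) t 0

theorem sphere_hamiltonian_conserved (N : ℕ) (Γ : Fin N → ℝ) (r : ℝ → Fin N → Fin 3 → ℝ)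
    (hsol : IsPVSolutionSphere N Γ r)
    (hunit : ∀ i : Fin N, dot3 (r 0 i) (r 0 i) = 1) :
    ∀ t : ℝ, sphereHamiltonian N Γ (r t) = sphereHamiltonian N Γ (r 0) :=
  sphere_hamiltonian_conserved_general N Γ r hsol
end

section
/- Two point-vortices on the sphere are relative equilibria (steady rotations): Let Γ₁, Γ₂ ∈ ℝ and let r₁, r₂ : ℝ → ℝ³ be differentiable curves solving the point-vortex equations on the sphere with N = 2, with ‖r₁(0)‖ = ‖r₂(0)‖ = 1 and r₁(t)·r₂(t) ≠ 1 for all t. Then r₁(t)·r₂(t) is constant in t, and for all t and i ∈ {1,2} one has ṙᵢ(t) = Ω × rᵢ(t), where Ω = −(Γ₁ r₁(0) + Γ₂ r₂(0)) / (2π (1 − r₁(0)·r₂(0))) is a constant vector; i.e., the motion is a steady rotation about the axis of the total linear momentum Γ₁r₁ + Γ₂r₂. -/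
open scoped BigOperators

/-!
Since `rᵢ × rᵢ = 0`, the velocity of each of two vortices is the cross product of one common
vector with its position: the momentum `Γ₀ r₀ + Γ₁ r₁` times a scalar depending only on `r₀ · r₁`.
So at every instant the pair rotates rigidly, which preserves `r₀ · r₁`; the antisymmetry of the
pair interaction conserves the momentum. Hence the instantaneous angular velocity is constant.
-/

open scoped Matrix

lemma cross_dotProduct_add_dotProduct_cross {R : Type*} [CommRing R] (ω u v : Fin 3 → R) :
    (ω ⨯₃ u) ⬝ᵥ v + u ⬝ᵥ (ω ⨯₃ v) = 0 := by
  rw [dotProduct_comm, triple_product_permutation v ω u, triple_product_permutation u ω v,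
    ← dotProduct_add, cross_anticomm', dotProduct_zero]

lemma hasDerivAt_dotProduct_s4 {𝕜 A ι : Type*} [NontriviallyNormedField 𝕜] [NormedRing A]
    [NormedAlgebra 𝕜 A] [Fintype ι] {u v : 𝕜 → ι → A} {u' v' : ι → A} {t : 𝕜}
    (hu : HasDerivAt u u' t) (hv : HasDerivAt v v' t) :
    HasDerivAt (fun s => u s ⬝ᵥ v s) (u' ⬝ᵥ v t + u t ⬝ᵥ v') t := by
  simpa only [dotProduct, ← Finset.sum_add_distrib] using
    HasDerivAt.fun_sum fun i _ => (hasDerivAt_pi.1 hu i).fun_mul (hasDerivAt_pi.1 hv i)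

lemma dotProduct_eq_of_hasDerivAt_cross {ω u v : ℝ → Fin 3 → ℝ}
    (hu : ∀ t, HasDerivAt u (ω t ⨯₃ u t) t) (hv : ∀ t, HasDerivAt v (ω t ⨯₃ v t) t) (s t : ℝ) :
    u s ⬝ᵥ v s = u t ⬝ᵥ v t := by
  have hderiv (x : ℝ) : HasDerivAt (fun x => u x ⬝ᵥ v x) 0 x :=
    (hasDerivAt_dotProduct_s4 (hu x) (hv x)).congr_deriv
      (cross_dotProduct_add_dotProduct_cross (ω x) (u x) (v x))
  exact is_const_of_deriv_eq_zero (fun x => (hderiv x).differentiableAt)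
    (fun x => (hderiv x).deriv) s t

lemma dot3_eq_dotProduct (a b : Fin 3 → ℝ) : dot3 a b = a ⬝ᵥ b := rfl

lemma dot3_comm (a b : Fin 3 → ℝ) : dot3 a b = dot3 b a := by
  rw [dot3_eq_dotProduct, dotProduct_comm, dot3_eq_dotProduct]

/-- The diagonal term, whose denominator vanishes on the unit sphere, is `0` because
`rᵢ × rᵢ = 0`. -/
lemma sphereRHS_eq_sum (N : ℕ) (Γ : Fin N → ℝ) (r : Fin N → Fin 3 → ℝ) (i : Fin N) :
    sphereRHS N Γ r i =
      ∑ j, (Γ j / (2 * Real.pi * (1 - dot3 (r i) (r j)))) • (r i ⨯₃ r j) := by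
  have ne_of_term_ne_zero (j : Fin N)
      (hj : (Γ j / (1 - dot3 (r i) (r j))) • (r i ⨯₃ r j) ≠ 0) : j ≠ i := by
    rintro rfl
    exact hj (by rw [cross_self, smul_zero])
  rw [sphereRHS, Finset.sum_filter_of_ne fun j _ => ne_of_term_ne_zero j, Finset.smul_sum]
  refine Finset.sum_congr rfl fun j _ => ?_
  rw [smul_smul, div_mul_div_comm, one_mul]

/-- The total linear momentum `∑ Γᵢ rᵢ` of a configuration of point vortices. -/
noncomputable def vortexMomentum (N : ℕ) (Γ : Fin N → ℝ) (r : Fin N → Fin 3 → ℝ) : Fin 3 → ℝ :=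
  ∑ i, Γ i • r i

lemma sum_smul_sphereRHS (N : ℕ) (Γ : Fin N → ℝ) (r : Fin N → Fin 3 → ℝ) :
    ∑ i, Γ i • sphereRHS N Γ r i = 0 := by
  let F (i j : Fin N) : Fin 3 → ℝ :=
    (Γ i * (Γ j / (2 * Real.pi * (1 - dot3 (r i) (r j))))) • (r i ⨯₃ r j)
  have F_antisymm (i j : Fin N) : F i j = -F j i := by
    simp only [F]
    rw [← cross_anticomm (r j), dot3_comm (r i), smul_neg, mul_div_left_comm]
  have sum_F : ∑ i, ∑ j, F i j = -∑ i, ∑ j, F i j :=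
    calc ∑ i, ∑ j, F i j = ∑ i, ∑ j, -F j i := by simp only [← F_antisymm]
      _ = -∑ i, ∑ j, F j i := by simp only [Finset.sum_neg_distrib]
      _ = -∑ i, ∑ j, F i j := by rw [Finset.sum_comm]
  simpa only [sphereRHS_eq_sum, Finset.smul_sum, smul_smul] using self_eq_neg.1 sum_F

lemma IsPVSolutionSphere.vortexMomentum_eq {N : ℕ} {Γ : Fin N → ℝ} {r : ℝ → Fin N → Fin 3 → ℝ}
    (hsol : IsPVSolutionSphere N Γ r) (s t : ℝ) :
    vortexMomentum N Γ (r s) = vortexMomentum N Γ (r t) := by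
  have hderiv (x : ℝ) : HasDerivAt (fun x => vortexMomentum N Γ (r x)) 0 x :=
    (HasDerivAt.fun_sum fun i _ => (hsol.2 x i).fun_const_smul (Γ i)).congr_deriv
      (sum_smul_sphereRHS N Γ (r x))
  exact is_const_of_deriv_eq_zero (fun x => (hderiv x).differentiableAt)
    (fun x => (hderiv x).deriv) s t

/-- The instantaneous angular velocity of a pair of point vortices: the vector about which both
vortices turn. Only meaningful when `r 0 · r 1 ≠ 1`; otherwise it is zero. -/
noncomputable def pairAngularVelocity (Γ : Fin 2 → ℝ) (r : Fin 2 → Fin 3 → ℝ) : Fin 3 → ℝ :=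
  (-(1 / (2 * Real.pi * (1 - dot3 (r 0) (r 1))))) • vortexMomentum 2 Γ r

lemma sphereRHS_two (Γ : Fin 2 → ℝ) (r : Fin 2 → Fin 3 → ℝ) (i : Fin 2) :
    sphereRHS 2 Γ r i = pairAngularVelocity Γ r ⨯₃ r i := by
  simp only [sphereRHS_eq_sum, pairAngularVelocity, vortexMomentum, Fin.sum_univ_two, map_smul,
    map_add, LinearMap.smul_apply, LinearMap.add_apply]
  fin_cases i
  · simp only [Fin.zero_eta, cross_self, ← cross_anticomm (r 0) (r 1)]
    module
  · simp only [Fin.mk_one, cross_self, ← cross_anticomm (r 0) (r 1), dot3_comm (r 1) (r 0)]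
    module

namespace IsPVSolutionSphere

variable {Γ : Fin 2 → ℝ} {r : ℝ → Fin 2 → Fin 3 → ℝ}

lemma hasDerivAt_pairAngularVelocity_cross (hsol : IsPVSolutionSphere 2 Γ r) (t : ℝ) (i : Fin 2) :
    HasDerivAt (fun s => r s i) (pairAngularVelocity Γ (r t) ⨯₃ r t i) t :=
  sphereRHS_two Γ (r t) i ▸ hsol.2 t i

lemma dot3_eq (hsol : IsPVSolutionSphere 2 Γ r) (i j : Fin 2) (s t : ℝ) :
    dot3 (r s i) (r s j) = dot3 (r t i) (r t j) := by
  simp only [dot3_eq_dotProduct]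
  exact dotProduct_eq_of_hasDerivAt_cross
    (fun x => hsol.hasDerivAt_pairAngularVelocity_cross x i)
    (fun x => hsol.hasDerivAt_pairAngularVelocity_cross x j) s t

lemma pairAngularVelocity_eq (hsol : IsPVSolutionSphere 2 Γ r) (s t : ℝ) :
    pairAngularVelocity Γ (r s) = pairAngularVelocity Γ (r t) := by
  rw [pairAngularVelocity, pairAngularVelocity, hsol.dot3_eq 0 1 s t, hsol.vortexMomentum_eq s t]

end IsPVSolutionSphere

theorem sphere_two_vortices_relative_equilibrium_general (Γ : Fin 2 → ℝ)
    (r : ℝ → Fin 2 → Fin 3 → ℝ)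
    (hsol : IsPVSolutionSphere 2 Γ r)
    (Ω : Fin 3 → ℝ)
    (hΩ : Ω = (-(1 / (2 * Real.pi * (1 - dot3 (r 0 0) (r 0 1))))) •
        (Γ 0 • r 0 0 + Γ 1 • r 0 1)) :
    (∀ t : ℝ, dot3 (r t 0) (r t 1) = dot3 (r 0 0) (r 0 1)) ∧
    (∀ (t : ℝ) (i : Fin 2), HasDerivAt (fun s => r s i) (Ω ⨯₃ r t i) t) := by
  have hΩ₀ : Ω = pairAngularVelocity Γ (r 0) := by
    rw [hΩ, pairAngularVelocity, vortexMomentum, Fin.sum_univ_two]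
  refine ⟨fun t => hsol.dot3_eq 0 1 t 0, fun t i => ?_⟩
  rw [hΩ₀, hsol.pairAngularVelocity_eq 0 t]
  exact hsol.hasDerivAt_pairAngularVelocity_cross t i

theorem sphere_two_vortices_relative_equilibrium (Γ : Fin 2 → ℝ) (r : ℝ → Fin 2 → Fin 3 → ℝ)
    (hsol : IsPVSolutionSphere 2 Γ r)
    (hunit : ∀ i : Fin 2, dot3 (r 0 i) (r 0 i) = 1)
    (Ω : Fin 3 → ℝ)
    (hΩ : Ω = (-(1 / (2 * Real.pi * (1 - dot3 (r 0 0) (r 0 1))))) •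
        (Γ 0 • r 0 0 + Γ 1 • r 0 1)) :
    (∀ t : ℝ, dot3 (r t 0) (r t 1) = dot3 (r 0 0) (r 0 1)) ∧
    (∀ (t : ℝ) (i : Fin 2), HasDerivAt (fun s => r s i) (crossProduct Ω (r t i)) t) :=
  sphere_two_vortices_relative_equilibrium_general Γ r hsol Ω hΩ
end

section
/- Spectral structure of the infinitesimal generator of K (Lemma 5.2): Let N ∈ ℕ and Γ : Fin N → ℝ, and let ξ_Γ : (ℝ²)^N → (ℝ²)^N be the linear map (ξ_Γ r)ᵢ = (Σⱼ Γⱼ rⱼ)^⊥ where (x, y)^⊥ = (y, −x). Then (a) ξ_Γ³ = −(Σᵢ Γᵢ)² ξ_Γ, so every nonzero eigenvalue of ξ_Γ (over ℂ) equals ±i Σᵢ Γᵢ; and (b) if some Γᵢ ≠ 0, the rank of ξ_Γ equals 2. In particular, if Σᵢ Γᵢ ≠ 0 the group generated by ξ_Γ is compact and hence acts properly. -/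
open scoped BigOperators

/-- Clockwise rotation by π/2: (x, y)^⊥ = (y, -x), as a linear map on ℝ². -/
noncomputable def perpL : ℝ × ℝ →ₗ[ℝ] ℝ × ℝ :=
  LinearMap.prod (LinearMap.snd ℝ ℝ ℝ) (-(LinearMap.fst ℝ ℝ ℝ))

/-- The infinitesimal generator ξ_Γ of the one-parameter group K acting on (ℝ²)^N:
    (ξ_Γ r)ᵢ = (Σⱼ Γⱼ rⱼ)^⊥ for every i. -/
noncomputable def xiGamma (N : ℕ) (Γ : Fin N → ℝ) :
    (Fin N → ℝ × ℝ) →ₗ[ℝ] (Fin N → ℝ × ℝ) :=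
  LinearMap.pi fun _ => perpL ∘ₗ (∑ j, Γ j • LinearMap.proj j)

/-!
The generator factors as `ξ_Γ = Δ ∘ J ∘ m`, where `m r = Σⱼ Γⱼ rⱼ`, `J` is the rotation `⊥` and `Δ`
is the diagonal embedding. Since `m ∘ Δ` is multiplication by `S = Σⱼ Γⱼ`, taking powers of `ξ_Γ`
only takes powers of `J` and of `S`: `ξ_Γⁿ⁺¹ = Sⁿ (Δ ∘ Jⁿ⁺¹ ∘ m)`. As `J³ = -J`, this gives the
cubic identity, which every eigenvalue has to satisfy. If some `Γᵢ` is invertible, then `m` is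
surjective, and as `J` is surjective and `Δ` injective, the rank of `ξ_Γ` is that of the space on
which `J` acts.
-/

open Module

section Semiring

variable {R M ι : Type*} [CommSemiring R] [AddCommMonoid M] [Module R M] [Fintype ι]

/-- The weighted sum `∑ j, Γ j • r j`, as a linear map in `r`; it is the first
factor of the generator `ξ_Γ`. -/
def weightedSum (Γ : ι → R) : (ι → M) →ₗ[R] M :=
  ∑ j, Γ j • LinearMap.proj j

lemma weightedSum_apply (Γ : ι → R) (r : ι → M) : weightedSum Γ r = ∑ j, Γ j • r j := by
  simp [weightedSum]

lemma weightedSum_const (Γ : ι → R) (x : M) :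
    weightedSum Γ (Function.const ι x) = (∑ j, Γ j) • x := by
  simp [weightedSum_apply, Finset.sum_smul]

lemma weightedSum_surjective {Γ : ι → R} {i : ι} (hi : IsUnit (Γ i)) :
    Function.Surjective (weightedSum (M := M) Γ) := by
  classical
  obtain ⟨u, hu⟩ := hi
  intro x
  refine ⟨Pi.single i (u⁻¹ • x), ?_⟩
  simp [weightedSum_apply, Pi.single_apply, ← hu, ← Units.smul_def]

/-- The generator `ξ_Γ` with an arbitrary endomorphism `J` of a module in place of the rotation
`⊥`: every component of its value at `r` is `J (∑ j, Γ j • r j)`. -/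
def diagonalGenerator (J : End R M) (Γ : ι → R) : End R (ι → M) :=
  LinearMap.const ∘ₗ J ∘ₗ weightedSum Γ

lemma diagonalGenerator_apply (J : End R M) (Γ : ι → R) (r : ι → M) :
    diagonalGenerator J Γ r = Function.const ι (J (weightedSum Γ r)) :=
  rfl

lemma diagonalGenerator_mul (J K : End R M) (Γ : ι → R) :
    diagonalGenerator J Γ * diagonalGenerator K Γ = (∑ j, Γ j) • diagonalGenerator (J * K) Γ := by
  ext1 r
  funext
  simp [diagonalGenerator_apply, weightedSum_const]

lemma diagonalGenerator_pow_succ (J : End R M) (Γ : ι → R) (n : ℕ) :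
    diagonalGenerator J Γ ^ (n + 1) = (∑ j, Γ j) ^ n • diagonalGenerator (J ^ (n + 1)) Γ := by
  induction n with
  | zero => simp
  | succ n ih =>
    rw [pow_succ, ih, smul_mul_assoc, diagonalGenerator_mul, smul_smul, ← pow_succ, ← pow_succ]

lemma finrank_range_diagonalGenerator (J : End R M) {Γ : ι → R} {i : ι} (hi : IsUnit (Γ i)) :
    finrank R (diagonalGenerator J Γ).range = finrank R J.range := by
  have : Nonempty ι := ⟨i⟩
  have hconst : Function.Injective (LinearMap.const (R := R) : M →ₗ[R] ι → M) :=
    Function.const_injective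
  rw [diagonalGenerator, LinearMap.range_comp, LinearMap.range_comp_of_range_eq_top J
    (LinearMap.range_eq_top.mpr (weightedSum_surjective hi))]
  exact (Submodule.equivMapOfInjective _ hconst _).finrank_eq.symm

end Semiring

section Ring

variable {R M ι : Type*} [CommRing R] [AddCommGroup M] [Module R M] [Fintype ι]

lemma diagonalGenerator_pow_three {J : End R M} (hJ : J ^ 2 = -1) (Γ : ι → R) :
    diagonalGenerator J Γ ^ 3 = (-(∑ j, Γ j) ^ 2) • diagonalGenerator J Γ := by
  have hJ3 : J ^ 3 = -J := by rw [pow_succ, hJ, neg_one_mul]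
  rw [diagonalGenerator_pow_succ, hJ3]
  ext1 r
  funext
  simp [diagonalGenerator_apply]

lemma eq_zero_or_sq_eq_of_hasEigenvector_diagonalGenerator [IsDomain R] [IsTorsionFree R M]
    {J : End R M} (hJ : J ^ 2 = -1) {Γ : ι → R} {μ : R} {v : ι → M}
    (hv : (diagonalGenerator J Γ).HasEigenvector μ v) :
    μ = 0 ∨ μ ^ 2 = -(∑ j, Γ j) ^ 2 := by
  have hcubic : μ ^ 3 • v = (-(∑ j, Γ j) ^ 2 * μ) • v := by
    rw [← hv.pow_apply, diagonalGenerator_pow_three hJ, LinearMap.smul_apply, hv.apply_eq_smul,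
      smul_smul]
  have hμ : μ ^ 2 * μ = -(∑ j, Γ j) ^ 2 * μ := by
    rw [← pow_succ]
    exact smul_left_injective R hv.2 hcubic
  exact (mul_eq_mul_right_iff.mp hμ).symm

theorem xiGamma_cubic_eigenvalues_rank_general [IsDomain R] [IsTorsionFree R M]
    {J : End R M} (hJ : J ^ 2 = -1) (Γ : ι → R) :
    diagonalGenerator J Γ ^ 3 = (-(∑ j, Γ j) ^ 2) • diagonalGenerator J Γ ∧
    (∀ μ v, (diagonalGenerator J Γ).HasEigenvector μ v → μ = 0 ∨ μ ^ 2 = -(∑ j, Γ j) ^ 2) ∧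
    ((∃ i, IsUnit (Γ i)) → finrank R (diagonalGenerator J Γ).range = finrank R M) := by
  refine ⟨diagonalGenerator_pow_three hJ Γ,
    fun _ _ ↦ eq_zero_or_sq_eq_of_hasEigenvector_diagonalGenerator hJ, fun ⟨i, hi⟩ ↦ ?_⟩
  have hJ_surj : Function.Surjective J := fun x ↦ ⟨-J x, by
    simpa [pow_two] using congrArg (-·) (LinearMap.congr_fun hJ x)⟩
  rw [finrank_range_diagonalGenerator J hi, LinearMap.range_eq_top.mpr hJ_surj, finrank_top]

end Ring

/-- The rotation `(x, y)^⊥ = (y, -x)` over any commutative ring: `perpL` over `ℝ`, and its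
complexification over `ℂ`. -/
def perp (R : Type*) [CommRing R] : End R (R × R) :=
  (LinearMap.snd R R R).prod (-LinearMap.fst R R R)

lemma perp_sq (R : Type*) [CommRing R] : perp R ^ 2 = -1 := by
  ext <;> simp [perp, pow_two]

lemma xiGamma_eq_diagonalGenerator (N : ℕ) (Γ : Fin N → ℝ) :
    xiGamma N Γ = diagonalGenerator (perp ℝ) Γ :=
  rfl

lemma diagonalGenerator_perp_apply {R ι : Type*} [CommRing R] [Fintype ι] (Γ : ι → R)
    (v : ι → R × R) :
    diagonalGenerator (perp R) Γ v = fun _ ↦ ((∑ j, Γ j • v j).2, -(∑ j, Γ j • v j).1) := by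
  rw [diagonalGenerator_apply, weightedSum_apply]
  rfl

lemma sq_eq_neg_sq_iff_eq_I_mul_or {z w : ℂ} :
    z ^ 2 = -w ^ 2 ↔ z = Complex.I * w ∨ z = -(Complex.I * w) := by
  rw [← sq_eq_sq_iff_eq_or_eq_neg, mul_pow, Complex.I_sq, neg_one_mul]

theorem xiGamma_cubic_eigenvalues_rank (N : ℕ) (Γ : Fin N → ℝ) :
    (∀ r : Fin N → ℝ × ℝ,
      xiGamma N Γ (xiGamma N Γ (xiGamma N Γ r)) = (-(∑ i, Γ i) ^ 2) • xiGamma N Γ r) ∧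
    (∀ (μ : ℂ) (v : Fin N → ℂ × ℂ), v ≠ 0 →
      (fun i : Fin N => ((∑ j, (Γ j : ℂ) • v j).2, -(∑ j, (Γ j : ℂ) • v j).1)) = μ • v →
      μ = 0 ∨ μ = Complex.I * (∑ i, (Γ i : ℂ)) ∨ μ = -(Complex.I * ∑ i, (Γ i : ℂ))) ∧
    ((∃ i, Γ i ≠ 0) → Module.finrank ℝ ↥(LinearMap.range (xiGamma N Γ)) = 2) := by
  obtain ⟨hcubic, -, hrank⟩ := xiGamma_cubic_eigenvalues_rank_general (perp_sq ℝ) Γ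
  rw [xiGamma_eq_diagonalGenerator]
  refine ⟨fun r ↦ LinearMap.congr_fun hcubic r, fun μ v hv hμv ↦ ?_, fun ⟨_, hi⟩ ↦ ?_⟩
  · have hvec : (diagonalGenerator (perp ℂ) fun j ↦ (Γ j : ℂ)).HasEigenvector μ v :=
      ⟨End.mem_eigenspace_iff.mpr ((diagonalGenerator_perp_apply _ v).trans hμv), hv⟩
    rw [← sq_eq_neg_sq_iff_eq_I_mul_or]
    exact (xiGamma_cubic_eigenvalues_rank_general (perp_sq ℂ) _).2.1 μ v hvec
  · simpa using hrank ⟨_, hi.isUnit⟩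
end

section
/- Three point-vortices in the plane with vanishing circulation and momentum are relative equilibria (rigid motion of the shape): Let Γ₁, Γ₂, Γ₃ ∈ ℝ \ {0} with Γ₁ + Γ₂ + Γ₃ = 0, and let r₁, r₂, r₃ : ℝ → ℝ² be differentiable curves solving the point-vortex equations on the plane with N = 3, with rᵢ(t) ≠ rⱼ(t) for all i ≠ j and all t, and with vanishing total linear momentum Γ₁ r₁(0) + Γ₂ r₂(0) + Γ₃ r₃(0) = 0. Then all pairwise distances are constant in time: ‖rᵢ(t) − rⱼ(t)‖ = ‖rᵢ(0) − rⱼ(0)‖ for all i, j and all t. -/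
/-!
Linear momentum is conserved because the interactions are antisymmetric, so it vanishes at all
times. Together with the vanishing circulation this makes `Γ` a nontrivial affine dependence
between the three positions, which are therefore collinear at all times. A vortex induces a velocity
orthogonal to the line joining it to the point where the velocity is measured, so in a collinear
configuration every velocity is orthogonal to the common line, and no distance changes to first
order.
-/

open scoped BigOperators

noncomputable def sq2 (v : ℝ × ℝ) : ℝ := v.1 ^ 2 + v.2 ^ 2

noncomputable def planeRHS (N : ℕ) (Γ : Fin N → ℝ) (r : Fin N → ℝ × ℝ) (i : Fin N) : ℝ × ℝ :=
  (-(1 / (2 * Real.pi)) * ∑ j ∈ Finset.univ.filter (fun j => j ≠ i),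
      Γ j * ((r i).2 - (r j).2) / sq2 (r i - r j),
    (1 / (2 * Real.pi)) * ∑ j ∈ Finset.univ.filter (fun j => j ≠ i),
      Γ j * ((r i).1 - (r j).1) / sq2 (r i - r j))

def IsPVSolutionPlane (N : ℕ) (Γ : Fin N → ℝ) (r : ℝ → Fin N → ℝ × ℝ) : Prop :=
  (∀ t : ℝ, ∀ i j : Fin N, i ≠ j → r t i ≠ r t j) ∧
  (∀ (t : ℝ) (i : Fin N), HasDerivAt (fun s => r s i) (planeRHS N Γ (r t) i) t)

lemma eq_of_forall_hasDerivAt_eq_zero {𝕜 E : Type*} [RCLike 𝕜] [NormedAddCommGroup E]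
    [NormedSpace 𝕜 E] {f : 𝕜 → E} (hf : ∀ t, HasDerivAt f 0 t) (s t : 𝕜) : f s = f t :=
  is_const_of_deriv_eq_zero (fun t => (hf t).differentiableAt) (fun t => (hf t).deriv) s t

/-- The Euclidean inner product of the plane. It is spelled out because `ℝ × ℝ` carries the
supremum norm. -/
def dot2 : ℝ × ℝ →ₗ[ℝ] ℝ × ℝ →ₗ[ℝ] ℝ :=
  LinearMap.mk₂ ℝ (fun u v => u.1 * v.1 + u.2 * v.2)
    (fun _ _ _ => by simp only [Prod.fst_add, Prod.snd_add]; ring)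
    (fun _ _ _ => by simp only [Prod.smul_fst, Prod.smul_snd, smul_eq_mul]; ring)
    (fun _ _ _ => by simp only [Prod.fst_add, Prod.snd_add]; ring)
    (fun _ _ _ => by simp only [Prod.smul_fst, Prod.smul_snd, smul_eq_mul]; ring)

lemma dot2_apply (u v : ℝ × ℝ) : dot2 u v = u.1 * v.1 + u.2 * v.2 := rfl

lemma hasDerivAt_sq2_comp {γ : ℝ → ℝ × ℝ} {v : ℝ × ℝ} {t : ℝ} (hγ : HasDerivAt γ v t) :
    HasDerivAt (fun s => sq2 (γ s)) (2 * dot2 (γ t) v) t := by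
  have hfst : HasDerivAt (fun s => (γ s).1) v.1 t :=
    (ContinuousLinearMap.fst ℝ ℝ ℝ).hasFDerivAt.comp_hasDerivAt t hγ
  have hsnd : HasDerivAt (fun s => (γ s).2) v.2 t :=
    (ContinuousLinearMap.snd ℝ ℝ ℝ).hasFDerivAt.comp_hasDerivAt t hγ
  refine ((hfst.pow 2).add (hsnd.pow 2)).congr_deriv ?_
  rw [dot2_apply]
  ring

/-- The Biot–Savart kernel: the velocity induced by a vortex of unit strength at displacement `v`
from it. At the vortex itself the division by zero gives the value `0`, so that a vortex does not
act on itself. -/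
noncomputable def biotSavart (v : ℝ × ℝ) : ℝ × ℝ :=
  (1 / (2 * Real.pi) / sq2 v) • (-v.2, v.1)

lemma biotSavart_zero : biotSavart 0 = 0 := by
  simp [biotSavart]

lemma biotSavart_neg (v : ℝ × ℝ) : biotSavart (-v) = -biotSavart v := by
  ext <;> simp [biotSavart, sq2]

lemma dot2_smul_biotSavart_smul (a b : ℝ) (w : ℝ × ℝ) :
    dot2 (a • w) (biotSavart (b • w)) = 0 := by
  simp only [dot2_apply, biotSavart, Prod.smul_fst, Prod.smul_snd, smul_eq_mul]
  ring

section Configuration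

variable {N : ℕ} (Γ : Fin N → ℝ) (r : Fin N → ℝ × ℝ)

lemma planeRHS_eq_sum_biotSavart (i : Fin N) :
    planeRHS N Γ r i = ∑ j, Γ j • biotSavart (r i - r j) := by
  have drop_self : ∑ j, Γ j • biotSavart (r i - r j) =
      ∑ j ∈ Finset.univ.filter (fun j => j ≠ i), Γ j • biotSavart (r i - r j) := by
    refine (Finset.sum_filter_of_ne fun j _ => mt fun hji => ?_).symm
    rw [hji, sub_self, biotSavart_zero, smul_zero]
  rw [drop_self]
  ext
  · rw [Prod.fst_sum]
    refine (Finset.mul_sum _ _ _).trans (Finset.sum_congr rfl fun j _ => ?_)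
    simp only [biotSavart, Prod.smul_fst, Prod.snd_sub, smul_eq_mul]
    ring
  · rw [Prod.snd_sum]
    refine (Finset.mul_sum _ _ _).trans (Finset.sum_congr rfl fun j _ => ?_)
    simp only [biotSavart, Prod.smul_snd, Prod.fst_sub, smul_eq_mul]
    ring

lemma sum_smul_planeRHS_eq_zero : ∑ i, Γ i • planeRHS N Γ r i = 0 := by
  have antisymm (i j : Fin N) : Γ i • Γ j • biotSavart (r i - r j) =
      -(Γ j • Γ i • biotSavart (r j - r i)) := by
    rw [← neg_sub (r j), biotSavart_neg, smul_neg, smul_neg, smul_comm]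
  simp only [planeRHS_eq_sum_biotSavart, Finset.smul_sum]
  refine self_eq_neg.mp ?_
  calc ∑ i, ∑ j, Γ i • Γ j • biotSavart (r i - r j)
      = ∑ i, ∑ j, -(Γ j • Γ i • biotSavart (r j - r i)) := by simp only [← antisymm]
    _ = -∑ i, ∑ j, Γ j • Γ i • biotSavart (r j - r i) := by simp only [Finset.sum_neg_distrib]
    _ = -∑ i, ∑ j, Γ i • Γ j • biotSavart (r i - r j) := by rw [Finset.sum_comm]

variable {r}

lemma dot2_sub_planeRHS_eq_zero_of_collinear (hr : Collinear ℝ (Set.range r)) (i j k : Fin N) :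
    dot2 (r i - r j) (planeRHS N Γ r k) = 0 := by
  obtain ⟨p, w, hw⟩ := (collinear_iff_exists_forall_eq_smul_vadd _).mp hr
  choose c hc using fun i => hw (r i) ⟨i, rfl⟩
  have sub_eq (i j : Fin N) : r i - r j = (c i - c j) • w := by
    rw [hc i, hc j, vadd_eq_add, vadd_eq_add, add_sub_add_right_eq_sub, sub_smul]
  rw [planeRHS_eq_sum_biotSavart, map_sum]
  refine Finset.sum_eq_zero fun l _ => ?_
  rw [map_smul, sub_eq, sub_eq, dot2_smul_biotSavart_smul, smul_zero]

end Configuration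

lemma collinear_range_of_sum_smul_eq_zero {K V : Type*} [DivisionRing K] [AddCommGroup V]
    [Module K V] {w : Fin 3 → K} {p : Fin 3 → V} (hw : w ≠ 0) (hsum : ∑ i, w i = 0)
    (hsmul : ∑ i, w i • p i = 0) : Collinear K (Set.range p) := by
  refine collinear_iff_not_affineIndependent.mpr fun hp => hw (funext fun i => ?_)
  exact hp.eq_zero_of_sum_eq_zero hsum hsmul i (Finset.mem_univ i)

namespace IsPVSolutionPlane

variable {N : ℕ} {Γ : Fin N → ℝ} {r : ℝ → Fin N → ℝ × ℝ}

lemma sum_smul_eq (hsol : IsPVSolutionPlane N Γ r) (s t : ℝ) :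
    ∑ i, Γ i • r s i = ∑ i, Γ i • r t i := by
  refine eq_of_forall_hasDerivAt_eq_zero (f := fun s => ∑ i, Γ i • r s i) (fun t => ?_) s t
  rw [← sum_smul_planeRHS_eq_zero Γ (r t)]
  exact HasDerivAt.fun_sum fun i _ => (hsol.2 t i).const_smul (Γ i)

lemma sq2_sub_eq_of_collinear (hsol : IsPVSolutionPlane N Γ r)
    (hr : ∀ t, Collinear ℝ (Set.range (r t))) (s t : ℝ) (i j : Fin N) :
    sq2 (r s i - r s j) = sq2 (r t i - r t j) := by
  refine eq_of_forall_hasDerivAt_eq_zero (f := fun s => sq2 (r s i - r s j)) (fun t => ?_) s t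
  refine (hasDerivAt_sq2_comp ((hsol.2 t i).fun_sub (hsol.2 t j))).congr_deriv ?_
  rw [map_sub, dot2_sub_planeRHS_eq_zero_of_collinear Γ (hr t),
    dot2_sub_planeRHS_eq_zero_of_collinear Γ (hr t), sub_zero, mul_zero]

end IsPVSolutionPlane

theorem plane_three_vortices_zero_circulation_momentum_relative_equilibrium
    (Γ : Fin 3 → ℝ) (hΓ : ∀ i, Γ i ≠ 0) (hcirc : ∑ i, Γ i = 0)
    (r : ℝ → Fin 3 → ℝ × ℝ) (hsol : IsPVSolutionPlane 3 Γ r)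
    (hmom : ∑ i, Γ i • r 0 i = 0) :
    ∀ (t : ℝ) (i j : Fin 3), sq2 (r t i - r t j) = sq2 (r 0 i - r 0 j) := by
  have hΓ_ne : Γ ≠ 0 := fun h => hΓ 0 (congrFun h 0)
  have hmom_all (t : ℝ) : ∑ i, Γ i • r t i = 0 := (hsol.sum_smul_eq t 0).trans hmom
  have hcol (t : ℝ) : Collinear ℝ (Set.range (r t)) :=
    collinear_range_of_sum_smul_eq_zero hΓ_ne hcirc (hmom_all t)
  exact fun t => hsol.sq2_sub_eq_of_collinear hcol t 0
end

section
/- Conservation laws on the hyperbolic plane: Let N ∈ ℕ, let Γ : Fin N → ℝ, and let r : ℝ → Fin N → ℝ³ be differentiable curves solving the point-vortex equations on the hyperbolic plane (with (rᵢ(t)·_L rⱼ(t))² ≠ 1 for all i ≠ j and all t). Then (a) the total linear momentum Σᵢ Γᵢ rᵢ(t) ∈ ℝ³ is constant in t, and (b) for each i the quantity rᵢ(t)·_L rᵢ(t) is constant in t; in particular if each rᵢ(0) lies on the hyperboloid rᵢ·_L rᵢ = 1, the solution remains on it for all t. -/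
open scoped BigOperators

/-- The Lorentzian pairing a ·_L b = -a₁b₁ - a₂b₂ + a₃b₃ on ℝ³, for L = diag(-1,-1,1). -/
noncomputable def dotL (a b : Fin 3 → ℝ) : ℝ := -(a 0 * b 0) - a 1 * b 1 + a 2 * b 2

/-- The Lorentzian cross product a ×_L b = L (a × b), for L = diag(-1,-1,1). -/
noncomputable def crossL (a b : Fin 3 → ℝ) : Fin 3 → ℝ :=
  ![-(crossProduct a b 0), -(crossProduct a b 1), crossProduct a b 2]

noncomputable def hypRHS (N : ℕ) (Γ : Fin N → ℝ) (r : Fin N → Fin 3 → ℝ) (i : Fin N) :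
    Fin 3 → ℝ :=
  (-(1 / Real.pi)) •
    ∑ j ∈ Finset.univ.filter (fun j => j ≠ i),
      (Γ j / ((dotL (r i) (r j)) ^ 2 - 1)) • crossL (r i) (r j)

def IsPVSolutionHyp (N : ℕ) (Γ : Fin N → ℝ) (r : ℝ → Fin N → Fin 3 → ℝ) : Prop :=
  (∀ t : ℝ, ∀ i j : Fin N, i ≠ j → (dotL (r t i) (r t j)) ^ 2 ≠ 1) ∧
  (∀ (t : ℝ) (i : Fin N), HasDerivAt (fun s => r s i) (hypRHS N Γ (r t) i) t)

/-!
Both laws are infinitesimal. In `∑ i, Γ i • ṙ i` the pair `{i, j}` contributes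
`Γ i Γ j / ((r i ·_L r j)² - 1)` times `(r i ×_L r j) + (r j ×_L r i) = 0`. For the second law,
`L² = 1` turns `a ·_L (a ×_L b)` into the Euclidean triple product `a · (a × b) = 0`, so every
velocity is Lorentz-orthogonal to its position.
-/

section General

theorem sum_sum_ne_eq_zero {ι M : Type*} [DecidableEq ι] [AddCommMonoid M] (s : Finset ι)
    {f : ι → ι → M} (hf : ∀ i ∈ s, ∀ j ∈ s, i ≠ j → f i j + f j i = 0) :
    ∑ i ∈ s, ∑ j ∈ s with j ≠ i, f i j = 0 := by
  rw [Finset.sum_sigma']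
  refine Finset.sum_involution (fun p _ => ⟨p.2, p.1⟩) ?_ ?_ ?_ fun _ _ => rfl
  · rintro ⟨i, j⟩ hp
    simp only [Finset.mem_sigma, Finset.mem_filter] at hp
    exact hf i hp.1 j hp.2.1 hp.2.2.symm
  · rintro ⟨i, j⟩ hp - hswap
    simp only [Finset.mem_sigma, Finset.mem_filter] at hp
    exact hp.2.2 (congrArg Sigma.fst hswap)
  · rintro ⟨i, j⟩ hp
    simp only [Finset.mem_sigma, Finset.mem_filter] at hp ⊢
    exact ⟨hp.2.1, hp.1, hp.2.2.symm⟩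

variable {𝕜 E : Type*} [RCLike 𝕜] [NormedAddCommGroup E] [NormedSpace 𝕜 E]

theorem eq_of_forall_hasDerivAt_zero {f : 𝕜 → E} (hf : ∀ t, HasDerivAt f 0 t) (t₀ t₁ : 𝕜) :
    f t₀ = f t₁ :=
  is_const_of_deriv_eq_zero (fun t => (hf t).differentiableAt) (fun t => (hf t).deriv) t₀ t₁

theorem bilin_self_eq_of_hasDerivAt_of_bilin_eq_zero [FiniteDimensional 𝕜 E]
    {B : LinearMap.BilinForm 𝕜 E} (hB : B.IsSymm) {u v : 𝕜 → E}
    (hu : ∀ t, HasDerivAt u (v t) t) (huv : ∀ t, B (u t) (v t) = 0) (t₀ t₁ : 𝕜) :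
    B (u t₀) (u t₀) = B (u t₁) (u t₁) := by
  refine eq_of_forall_hasDerivAt_zero (f := fun t => B (u t) (u t)) (fun t => ?_) t₀ t₁
  have hvu : B (v t) (u t) = 0 := (hB.eq (u t) (v t)).symm.trans (huv t)
  simpa [huv, hvu] using
    B.toContinuousBilinearMap.hasDerivAt_of_bilinear (fun _ => hu t) (fun _ => hu t)

end General

section Lorentzian

open Matrix

/-- The matrix `L = diag(-1, -1, 1)` of the Lorentzian pairing. -/
def lorentzMatrix : Matrix (Fin 3) (Fin 3) ℝ :=
  diagonal ![-1, -1, 1]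

theorem lorentzMatrix_mul_self : lorentzMatrix * lorentzMatrix = 1 := by
  rw [lorentzMatrix, diagonal_mul_diagonal, ← diagonal_one]
  congr 1
  ext k
  fin_cases k <;> simp

/-- The Lorentzian pairing `dotL` as a bilinear form, so that Mathlib's product rule for
bilinear maps applies to it. -/
noncomputable def lorentzForm : LinearMap.BilinForm ℝ (Fin 3 → ℝ) :=
  toBilin' lorentzMatrix

theorem dotL_eq_dotProduct_mulVec (a b : Fin 3 → ℝ) : dotL a b = a ⬝ᵥ lorentzMatrix *ᵥ b := by
  simp only [dotL, lorentzMatrix, dotProduct, mulVec_diagonal, Fin.sum_univ_three, cons_val]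
  ring

theorem lorentzForm_apply (a b : Fin 3 → ℝ) : lorentzForm a b = dotL a b := by
  rw [lorentzForm, toBilin'_apply', dotL_eq_dotProduct_mulVec]

theorem dotL_comm (a b : Fin 3 → ℝ) : dotL a b = dotL b a := by
  unfold dotL
  ring

theorem lorentzForm_isSymm : lorentzForm.IsSymm :=
  ⟨fun a b => by simpa only [lorentzForm_apply] using dotL_comm a b⟩

theorem crossL_eq_mulVec (a b : Fin 3 → ℝ) : crossL a b = lorentzMatrix *ᵥ (a ⨯₃ b) := by
  ext k
  fin_cases k <;> simp [crossL, lorentzMatrix, mulVec_diagonal]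

theorem crossL_add_crossL_swap (a b : Fin 3 → ℝ) : crossL a b + crossL b a = 0 := by
  rw [crossL_eq_mulVec, crossL_eq_mulVec, ← mulVec_add, cross_anticomm', mulVec_zero]

theorem dotL_self_crossL (a b : Fin 3 → ℝ) : dotL a (crossL a b) = 0 :=
  calc dotL a (crossL a b)
      = a ⬝ᵥ (lorentzMatrix * lorentzMatrix) *ᵥ (a ⨯₃ b) := by
        rw [dotL_eq_dotProduct_mulVec, crossL_eq_mulVec, mulVec_mulVec]
    _ = a ⬝ᵥ a ⨯₃ b := by rw [lorentzMatrix_mul_self, one_mulVec]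
    _ = 0 := dot_self_cross a b

end Lorentzian

section PointVortices

variable {N : ℕ} (Γ : Fin N → ℝ)

theorem sum_smul_hypRHS (r : Fin N → Fin 3 → ℝ) : ∑ i, Γ i • hypRHS N Γ r i = 0 := by
  have pair_cancel : ∀ i j, (Γ i * Γ j / (dotL (r i) (r j) ^ 2 - 1)) • crossL (r i) (r j) +
      (Γ j * Γ i / (dotL (r j) (r i) ^ 2 - 1)) • crossL (r j) (r i) = 0 := fun i j => by
    rw [dotL_comm (r j), mul_comm (Γ j), ← smul_add, crossL_add_crossL_swap, smul_zero]
  calc ∑ i, Γ i • hypRHS N Γ r i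
      = (-(1 / Real.pi)) • ∑ i, ∑ j with j ≠ i,
          (Γ i * Γ j / (dotL (r i) (r j) ^ 2 - 1)) • crossL (r i) (r j) := by
        simp only [hypRHS, Finset.smul_sum, smul_smul, mul_left_comm (Γ _), mul_div_assoc]
    _ = 0 := by rw [sum_sum_ne_eq_zero _ fun i _ j _ _ => pair_cancel i j, smul_zero]

theorem dotL_hypRHS (r : Fin N → Fin 3 → ℝ) (i : Fin N) : dotL (r i) (hypRHS N Γ r i) = 0 := by
  simp only [hypRHS, ← lorentzForm_apply, map_smul, map_sum]
  simp only [lorentzForm_apply, dotL_self_crossL, smul_zero, Finset.sum_const_zero]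

variable {Γ} {r : ℝ → Fin N → Fin 3 → ℝ}

theorem IsPVSolutionHyp.sum_smul_eq (hsol : IsPVSolutionHyp N Γ r) (t₀ t₁ : ℝ) :
    ∑ i, Γ i • r t₀ i = ∑ i, Γ i • r t₁ i := by
  refine eq_of_forall_hasDerivAt_zero (f := fun t => ∑ i, Γ i • r t i) (fun t => ?_) t₀ t₁
  rw [← sum_smul_hypRHS Γ (r t)]
  exact HasDerivAt.fun_sum fun i _ => (hsol.2 t i).const_smul (Γ i)

theorem IsPVSolutionHyp.dotL_self_eq (hsol : IsPVSolutionHyp N Γ r) (i : Fin N) (t₀ t₁ : ℝ) :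
    dotL (r t₀ i) (r t₀ i) = dotL (r t₁ i) (r t₁ i) := by
  simp only [← lorentzForm_apply]
  refine bilin_self_eq_of_hasDerivAt_of_bilin_eq_zero (u := fun t => r t i) lorentzForm_isSymm
    (fun t => hsol.2 t i) (fun t => ?_) t₀ t₁
  rw [lorentzForm_apply, dotL_hypRHS]

end PointVortices

theorem hyp_conservation_laws (N : ℕ) (Γ : Fin N → ℝ) (r : ℝ → Fin N → Fin 3 → ℝ)
    (hsol : IsPVSolutionHyp N Γ r) :
    (∀ t : ℝ, ∑ i, Γ i • r t i = ∑ i, Γ i • r 0 i) ∧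
    (∀ (t : ℝ) (i : Fin N), dotL (r t i) (r t i) = dotL (r 0 i) (r 0 i)) ∧
    ((∀ i : Fin N, dotL (r 0 i) (r 0 i) = 1) →
      ∀ (t : ℝ) (i : Fin N), dotL (r t i) (r t i) = 1) :=
  ⟨fun t => hsol.sum_smul_eq t 0, fun t i => hsol.dotL_self_eq i t 0,
    fun h₀ t i => (hsol.dotL_self_eq i t 0).trans (h₀ i)⟩
end
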